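/- arXiv:0706.1634 — 2 statements merged into one kernel-verified Lean document; each statement's English description precedes it below -/
import Mathlib

section
/- Let s ∈ ℂ and v ∈ ℂⁿ with v^*·v = 1. Then M(s)·v = 0 if and only if both L(v·v^*, s) = 0 and v^*·M(s)·v = 0. -/
open Matrix Complex
open scoped ComplexConjugate

/-- The characteristic matrix `M(s) = -s I + ∑ₖ Aₖ e^{-hₖ s}` of the DDE
`ẋ(t) = ∑ₖ Aₖ x(t - hₖ)`, with real matrices `Aₖ` regarded as complex matrices. -/
noncomputable def charM (n m : ℕ) (A : Fin (m+1) → Matrix (Fin n) (Fin n) ℝ)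
    (h : Fin (m+1) → ℝ) (s : ℂ) : Matrix (Fin n) (Fin n) ℂ :=
  (-s) • (1 : Matrix (Fin n) (Fin n) ℂ) +
    ∑ k : Fin (m+1), Complex.exp (-(h k : ℂ) * s) • ((A k).map Complex.ofReal)

/-- The operator `L(X, s) = M(s) X + X M(s)^*`. -/
noncomputable def Lop (n m : ℕ) (A : Fin (m+1) → Matrix (Fin n) (Fin n) ℝ)
    (h : Fin (m+1) → ℝ) (X : Matrix (Fin n) (Fin n) ℂ) (s : ℂ) :
    Matrix (Fin n) (Fin n) ℂ :=
  charM n m A h s * X + X * (charM n m A h s)ᴴ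

section StarRing

variable {ι R : Type*} [Fintype ι] [NonUnitalSemiring R] [StarRing R]

theorem mul_vecMulVec_star_add_vecMulVec_star_mul_conjTranspose
    (M : Matrix ι ι R) (v : ι → R) :
    M * vecMulVec v (star v) + vecMulVec v (star v) * Mᴴ =
      vecMulVec (M *ᵥ v) (star v) + vecMulVec v (star (M *ᵥ v)) := by
  rw [mul_vecMulVec, vecMulVec_mul, star_mulVec]

-- Applying the matrix to `v` leaves `w (v^* v) + v (w^* v)`, whose second term vanishes.
theorem eq_zero_of_vecMulVec_star_add_vecMulVec_star_eq_zero {v w : ι → R}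
    (hv : IsRightRegular (star v ⬝ᵥ v))
    (hvw : vecMulVec w (star v) + vecMulVec v (star w) = 0) (horth : star v ⬝ᵥ w = 0) :
    w = 0 := by
  have horth' : star w ⬝ᵥ v = 0 := by
    rw [star_dotProduct, horth, star_zero]
  have hmul : MulOpposite.op (star v ⬝ᵥ v) • w = 0 := by
    simpa only [add_mulVec, vecMulVec_mulVec, horth', MulOpposite.op_zero, zero_smul, add_zero,
      zero_mulVec] using congrArg (· *ᵥ v) hvw
  funext i
  have hmul_apply : w i * (star v ⬝ᵥ v) = 0 := congrFun hmul i
  exact hv (hmul_apply.trans (zero_mul _).symm)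

theorem statement0_general (M : Matrix ι ι R) {v : ι → R}
    (hv : IsRightRegular (star v ⬝ᵥ v)) :
    M *ᵥ v = 0 ↔
      M * vecMulVec v (star v) + vecMulVec v (star v) * Mᴴ = 0 ∧ star v ⬝ᵥ M *ᵥ v = 0 := by
  rw [mul_vecMulVec_star_add_vecMulVec_star_mul_conjTranspose]
  constructor
  · intro hMv
    simp [hMv]
  · rintro ⟨hL, horth⟩
    exact eq_zero_of_vecMulVec_star_add_vecMulVec_star_eq_zero hv hL horth

end StarRing

/-- Theorem (equivalence): for `v^* v = 1`, `M(s) v = 0` iff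
`L(v v^*, s) = 0` and `v^* M(s) v = 0`. -/
theorem statement0 (n m : ℕ) (hn : 0 < n) (hm : 0 < m)
    (A : Fin (m+1) → Matrix (Fin n) (Fin n) ℝ) (h : Fin (m+1) → ℝ) (h0 : h 0 = 0)
    (s : ℂ) (v : Fin n → ℂ) (hv : star v ⬝ᵥ v = 1) :
    (charM n m A h s).mulVec v = 0 ↔
      (Lop n m A h (vecMulVec v (star v)) s = 0 ∧
        star v ⬝ᵥ (charM n m A h s).mulVec v = 0) :=
  statement0_general _ (hv ▸ isRegular_one.right)
end

section
/- Let a_0, …, a_m ∈ ℝ with a_m ≠ 0, let φ_1, …, φ_{m−1} ∈ ℝ with the convention φ_0 = 0, and set C := Σ_{k=0}^{m−1} a_k·cos(φ_k) and S := Σ_{k=0}^{m−1} a_k·sin(φ_k). Assume C² ≤ a_m², let ε ∈ {−1, 1}, and set ω := −S + ε·√(a_m² − C²); assume ω ≠ 0. For any integers p_1, …, p_m, define h_k := (φ_k + 2·p_k·π)/ω for k = 1, …, m−1 and h_m := (−ε·sign(a_m)·arccos(−C/a_m) + 2·p_m·π)/ω. Then −iω + Σ_{k=0}^m a_k·e^{−i·h_k·ω}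 = 0 (with h_0 = 0), i.e. iω is a purely imaginary eigenvalue of the scalar delay-differential equation with delays h_1, …, h_m. -/
open Complex

/-!
Multiplying a delay by `ω` recovers its phase modulo `2π`, so the terms `k < m` add up to `C - iS`.
The phase of the last term is chosen so that this term has real part `-C`; its modulus being `|aₘ|`,
its imaginary part is then `±√(aₘ² - C²)`. The real parts cancel, and the imaginary parts
add up to `ω`.
-/

lemma exp_neg_I_mul_add_two_pi_div_mul {ω : ℝ} (hω : ω ≠ 0) (θ : ℝ) (p : ℤ) :
    exp (-(I * ((θ + 2 * p * Real.pi) / ω : ℝ) * ω)) = exp (-θ * I) := by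
  have hω' : (ω : ℂ) ≠ 0 := ofReal_ne_zero.mpr hω
  refine exp_eq_exp_iff_exists_int.mpr ⟨-p, ?_⟩
  push_cast
  field_simp
  ring

lemma sum_ofReal_mul_exp_neg_mul_I {ι : Type*} (s : Finset ι) (a φ : ι → ℝ) :
    ∑ k ∈ s, (a k : ℂ) * exp (-φ k * I) =
      (∑ k ∈ s, a k * Real.cos (φ k) : ℝ) - (∑ k ∈ s, a k * Real.sin (φ k) : ℝ) * I := by
  push_cast
  rw [Finset.sum_mul, ← Finset.sum_sub_distrib]
  refine Finset.sum_congr rfl fun k _ ↦ ?_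
  rw [exp_mul_I, cos_neg, sin_neg]
  ring

lemma cos_mul_of_eq_one_or_eq_neg_one {σ : ℝ} (hσ : σ = 1 ∨ σ = -1) (x : ℝ) :
    Real.cos (σ * x) = Real.cos x := by
  rcases hσ with rfl | rfl <;> simp

lemma sin_mul_of_eq_one_or_eq_neg_one {σ : ℝ} (hσ : σ = 1 ∨ σ = -1) (x : ℝ) :
    Real.sin (σ * x) = σ * Real.sin x := by
  rcases hσ with rfl | rfl <;> simp

lemma mul_sign_eq_abs (b : ℝ) : b * Real.sign b = |b| := by
  rcases lt_trichotomy b 0 with hb | rfl | hb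
  · rw [Real.sign_of_neg hb, abs_of_neg hb, mul_neg_one]
  · simp
  · rw [Real.sign_of_pos hb, abs_of_pos hb, mul_one]

lemma mul_cos_arccos_div {b c : ℝ} (hb : b ≠ 0) (hcb : c ^ 2 ≤ b ^ 2) :
    b * Real.cos (Real.arccos (c / b)) = c := by
  have habs : |c / b| ≤ 1 := by
    rw [abs_div, div_le_one (abs_pos.mpr hb)]
    exact sq_le_sq.mp hcb
  rw [Real.cos_arccos (abs_le.mp habs).1 (abs_le.mp habs).2, mul_div_cancel₀ c hb]

lemma abs_mul_sin_arccos_div {b : ℝ} (hb : b ≠ 0) (c : ℝ) :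
    |b| * Real.sin (Real.arccos (c / b)) = √(b ^ 2 - c ^ 2) := by
  rw [Real.sin_arccos, ← Real.sqrt_sq_eq_abs, ← Real.sqrt_mul (sq_nonneg b)]
  congr 1
  field_simp

-- The factor `sign b` makes the sign of the imaginary part depend on `ε` alone.
lemma ofReal_mul_exp_sign_mul_arccos_mul_I {b c ε : ℝ} (hb : b ≠ 0)
    (hcb : c ^ 2 ≤ b ^ 2) (hε : ε = 1 ∨ ε = -1) :
    (b : ℂ) * exp ((ε * Real.sign b * Real.arccos (c / b) : ℝ) * I) =
      c + (ε * √(b ^ 2 - c ^ 2) : ℝ) * I := by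
  have hsign := (Real.sign_apply_eq_of_ne_zero b hb).symm
  have hre : b * Real.cos (ε * Real.sign b * Real.arccos (c / b)) = c := by
    rw [mul_assoc, cos_mul_of_eq_one_or_eq_neg_one hε, cos_mul_of_eq_one_or_eq_neg_one hsign,
      mul_cos_arccos_div hb hcb]
  have him : b * Real.sin (ε * Real.sign b * Real.arccos (c / b)) = ε * √(b ^ 2 - c ^ 2) := by
    rw [mul_assoc, sin_mul_of_eq_one_or_eq_neg_one hε, sin_mul_of_eq_one_or_eq_neg_one hsign,
      ← abs_mul_sin_arccos_div hb, ← mul_sign_eq_abs]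
    ring
  rw [exp_ofReal_mul_I, mul_add, ← mul_assoc, ← ofReal_mul, ← ofReal_mul, hre, him]

/-- Corollary (scalar case): explicit parameterization of the critical delays.
With `C = ∑ₖ aₖ cos φₖ`, `S = ∑ₖ aₖ sin φₖ` (k = 0,…,m−1, φ₀ = 0),
`C² ≤ aₘ²`, `ε = ±1`, `ω = −S + ε √(aₘ² − C²) ≠ 0`, and delays
`hₖ = (φₖ + 2 pₖ π)/ω` (k = 1,…,m−1),
`hₘ = (−ε sign(aₘ) arccos(−C/aₘ) + 2 pₘ π)/ω`,
one has `−iω + ∑_{k=0}^m aₖ e^{−i hₖ ω} = 0` (with `h₀ = 0`). -/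
theorem statement8 (m : ℕ) (hm : 0 < m)
    (a : Fin (m+1) → ℝ) (ham : a (Fin.last m) ≠ 0)
    (φ : Fin m → ℝ) (hφ0 : φ ⟨0, hm⟩ = 0)
    (C S : ℝ)
    (hC : C = ∑ k : Fin m, a k.castSucc * Real.cos (φ k))
    (hS : S = ∑ k : Fin m, a k.castSucc * Real.sin (φ k))
    (hCbound : C ^ 2 ≤ (a (Fin.last m)) ^ 2)
    (ε : ℝ) (hε : ε = 1 ∨ ε = -1)
    (ω : ℝ) (hω : ω = -S + ε * Real.sqrt ((a (Fin.last m)) ^ 2 - C ^ 2)) (hω0 : ω ≠ 0)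
    (p : Fin (m+1) → ℤ) (h : Fin (m+1) → ℝ) (h0 : h 0 = 0)
    (hdel : ∀ k : Fin m, (k : ℕ) ≠ 0 →
      h k.castSucc = (φ k + 2 * (p k.castSucc : ℝ) * Real.pi) / ω)
    (hdelm : h (Fin.last m) =
      (-(ε * Real.sign (a (Fin.last m)) * Real.arccos (-C / a (Fin.last m))) +
        2 * (p (Fin.last m) : ℝ) * Real.pi) / ω) :
    -(Complex.I * (ω : ℂ)) +
      ∑ k : Fin (m+1), (a k : ℂ) * Complex.exp (-(Complex.I * (h k : ℂ) * (ω : ℂ))) = 0 := by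
  have hexp (k : Fin m) : exp (-(I * h k.castSucc * ω)) = exp (-φ k * I) := by
    by_cases hk : (k : ℕ) = 0
    · obtain rfl : k = ⟨0, hm⟩ := Fin.ext hk
      have hdel0 : h (Fin.castSucc ⟨0, hm⟩) = 0 := h0
      rw [hdel0, hφ0]
      simp
    · rw [hdel k hk, exp_neg_I_mul_add_two_pi_div_mul hω0]
  have hfirst : ∑ k : Fin m, (a k.castSucc : ℂ) * exp (-(I * h k.castSucc * ω)) = C - S * I := by
    simp only [hexp]
    rw [sum_ofReal_mul_exp_neg_mul_I, ← hC, ← hS]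
  have hlast : (a (Fin.last m) : ℂ) * exp (-(I * h (Fin.last m) * ω)) =
      -C + (ε * √(a (Fin.last m) ^ 2 - C ^ 2) : ℝ) * I := by
    rw [hdelm, exp_neg_I_mul_add_two_pi_div_mul hω0, ofReal_neg, neg_neg,
      ofReal_mul_exp_sign_mul_arccos_mul_I ham (by rwa [neg_sq]) hε, neg_sq, ofReal_neg]
  rw [Fin.sum_univ_castSucc, hfirst, hlast, hω]
  push_cast
  ring
end
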